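/- Let n ≥ 2 and let M ⊂ ℝⁿ be a nonempty bounded open connected set with closure M̄. Then there exist two C² functions a₁, a₂ : M̄ × ℝ → ℝ with a₁ ≠ a₂, both satisfying a_j(x,0) = 0 and ∂_μ a_j(x,μ) ≥ 0 for all (x,μ) ∈ M̄ × ℝ (j = 1,2), such that for every function u : M̄ → ℝ that is continuous on M̄ and twice continuously differentiable on M, u satisfies −Δu(x) + a₁(x,u(x)) = 0 for all x ∈ M if and only if u satisfies −Δu(x) + a₂(x,u(x)) = 0 for all x ∈ M. In particular, the two semilinear equations have identical sets of classical solutions, and hence identical Dirichlet-to-Neumann data, even though a₁ ≠ a₂. -/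

import Mathlib

open Set Metric

/-- The Euclidean Laplacian `Δu(x) = ∑ i, ∂²u/∂xᵢ²(x)`. -/
noncomputable def lap {n : ℕ} (u : EuclideanSpace ℝ (Fin n) → ℝ)
    (x : EuclideanSpace ℝ (Fin n)) : ℝ :=
  ∑ i : Fin n,
    fderiv ℝ (fun y => fderiv ℝ u y (EuclideanSpace.single i 1)) x (EuclideanSpace.single i 1)

/-!
Keller–Osserman interior bound: if `Δu ≥ u³` wherever `u > 0`, then `u` is bounded above in the
interior of a ball, whatever its boundary values. Indeed, let `ρ(x) = R² - |x - x₀|²` and let `y` be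
a positive maximum of `ρ u` over the ball. Then `∇(ρ u) = 0` and `Δ(ρ u) ≤ 0` at `y`, and
eliminating `∇u` gives `ρ² u³ ≤ ρ² Δu ≤ (2 n ρ + 8 |y - x₀|²) u ≤ (2 n + 8) R² u`.

Hence, if the support of `φ` is compact in `M`, there is a threshold `K` such that every solution of
`Δu = u³ + φ(x) g(u)` with `φ, g ≥ 0` lies below `K` on this support, whatever `g` is. When `g`
vanishes on `(-∞, K]`, the extra term therefore vanishes along every solution, both of this equation
and of `Δu = u³`.
-/

section Calculus

open Filter Topology

lemma deriv_deriv_nonpos_of_isLocalMax {f : ℝ → ℝ} {t : ℝ} (hf : ContinuousAt f t)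
    (hmax : IsLocalMax f t) : deriv (deriv f) t ≤ 0 := by
  by_contra! hpos
  have hmin : IsLocalMin f t := isLocalMin_of_deriv_deriv_pos hpos hmax.deriv_eq_zero hf
  have hconst : f =ᶠ[𝓝 t] fun _ => f t := by
    filter_upwards [hmax, hmin] with s hle hge using le_antisymm hle hge
  have hzero : deriv (deriv f) t = 0 := by
    rw [hconst.deriv.deriv_eq]
    simp
  exact hpos.ne' hzero

variable {E F : Type*} [NormedAddCommGroup E] [NormedSpace ℝ E]
  [NormedAddCommGroup F] [NormedSpace ℝ F]

lemma differentiableAt_fderiv_of_contDiffAt_two {f : E → F} {x : E} (hf : ContDiffAt ℝ 2 f x) :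
    DifferentiableAt ℝ (fderiv ℝ f) x :=
  (hf.fderiv_right (m := 1) (by norm_num)).differentiableAt one_ne_zero

lemma fderiv_fderiv_apply_nonpos_of_isLocalMax {f : E → ℝ} {x : E} (hf : ContDiffAt ℝ 2 f x)
    (hmax : IsLocalMax f x) (v : E) : fderiv ℝ (fderiv ℝ f) x v v ≤ 0 := by
  let line : ℝ → E := fun t => x + t • v
  have line_zero : line 0 = x := by simp [line]
  have hline (t : ℝ) : HasDerivAt line v t :=
    (((hasDerivAt_id t).smul_const v).const_add x).congr_deriv (one_smul ℝ v)
  have htendsto : Tendsto line (𝓝 0) (𝓝 x) := line_zero ▸ (hline 0).continuousAt.tendsto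
  have hderiv : deriv (f ∘ line) =ᶠ[𝓝 0] fun t => fderiv ℝ f (line t) v := by
    filter_upwards [htendsto.eventually (hf.eventually (by simp))] with t ht
    exact ((ht.differentiableAt two_ne_zero).hasFDerivAt.comp_hasDerivAt t (hline t)).deriv
  have hderiv_two : deriv (deriv (f ∘ line)) 0 = fderiv ℝ (fderiv ℝ f) x v v := by
    rw [hderiv.deriv_eq]
    have hf' : HasFDerivAt (fderiv ℝ f) (fderiv ℝ (fderiv ℝ f) x) (line 0) :=
      line_zero.symm ▸ (differentiableAt_fderiv_of_contDiffAt_two hf).hasFDerivAt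
    simpa using ((hf'.comp_hasDerivAt 0 (hline 0)).clm_apply (hasDerivAt_const 0 v)).deriv
  have hmax_line : IsLocalMax (f ∘ line) 0 := by
    filter_upwards [htendsto.eventually hmax] with t ht
    simpa [line_zero] using ht
  have hcont : ContinuousAt (f ∘ line) 0 :=
    ContinuousAt.comp (line_zero.symm ▸ hf.continuousAt) (hline 0).continuousAt
  exact hderiv_two ▸ deriv_deriv_nonpos_of_isLocalMax hcont hmax_line

lemma fderiv_fderiv_mul_apply {f g : E → ℝ} {x : E} (hf : ContDiffAt ℝ 2 f x)
    (hg : ContDiffAt ℝ 2 g x) (v : E) :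
    fderiv ℝ (fderiv ℝ fun z => f z * g z) x v v =
      f x * fderiv ℝ (fderiv ℝ g) x v v + 2 * (fderiv ℝ f x v * fderiv ℝ g x v) +
        g x * fderiv ℝ (fderiv ℝ f) x v v := by
  have hfst : fderiv ℝ (fun z => f z * g z) =ᶠ[𝓝 x]
      fun z => f z • fderiv ℝ g z + g z • fderiv ℝ f z := by
    filter_upwards [hf.eventually (by simp), hg.eventually (by simp)] with z hfz hgz
    exact fderiv_fun_mul (hfz.differentiableAt two_ne_zero) (hgz.differentiableAt two_ne_zero)
  have hsnd := ((hf.differentiableAt two_ne_zero).hasFDerivAt.smul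
    (differentiableAt_fderiv_of_contDiffAt_two hg).hasFDerivAt).add
    ((hg.differentiableAt two_ne_zero).hasFDerivAt.smul
    (differentiableAt_fderiv_of_contDiffAt_two hf).hasFDerivAt)
  rw [(hsnd.congr_of_eventuallyEq hfst).fderiv]
  simp only [add_apply, smul_apply, ContinuousLinearMap.smulRight_apply, smul_eq_mul]
  ring

end Calculus

section Laplacian

open InnerProductSpace Laplacian Module

variable {E : Type*} [NormedAddCommGroup E] [InnerProductSpace ℝ E] [FiniteDimensional ℝ E]
  {ι : Type*} [Fintype ι]

lemma laplacian_eq_sum_fderiv_fderiv_apply {F : Type*} [NormedAddCommGroup F] [NormedSpace ℝ F]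
    (b : OrthonormalBasis ι ℝ E) (f : E → F) (x : E) :
    Δ f x = ∑ i, fderiv ℝ (fderiv ℝ f) x (b i) (b i) := by
  simp [laplacian_eq_iteratedFDeriv_orthonormalBasis f b, iteratedFDeriv_two_apply]

lemma lap_eq_laplacian {n : ℕ} {u : EuclideanSpace ℝ (Fin n) → ℝ} {x : EuclideanSpace ℝ (Fin n)}
    (hu : ContDiffAt ℝ 2 u x) : lap u x = Δ u x := by
  rw [laplacian_eq_sum_fderiv_fderiv_apply (EuclideanSpace.basisFun (Fin n) ℝ), lap]
  refine Finset.sum_congr rfl fun i _ => ?_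
  rw [fderiv_clm_apply (differentiableAt_fderiv_of_contDiffAt_two hu)
    (differentiableAt_const _)]
  simp

lemma laplacian_nonpos_of_isLocalMax {f : E → ℝ} {x : E} (hf : ContDiffAt ℝ 2 f x)
    (hmax : IsLocalMax f x) : Δ f x ≤ 0 := by
  rw [laplacian_eq_sum_fderiv_fderiv_apply (stdOrthonormalBasis ℝ E)]
  exact Finset.sum_nonpos fun i _ => fderiv_fderiv_apply_nonpos_of_isLocalMax hf hmax _

lemma laplacian_mul (b : OrthonormalBasis ι ℝ E) {f g : E → ℝ} {x : E}
    (hf : ContDiffAt ℝ 2 f x) (hg : ContDiffAt ℝ 2 g x) :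
    Δ (fun z => f z * g z) x =
      f x * Δ g x + 2 * ∑ i, fderiv ℝ f x (b i) * fderiv ℝ g x (b i) + g x * Δ f x := by
  simp only [laplacian_eq_sum_fderiv_fderiv_apply b, fderiv_fderiv_mul_apply hf hg,
    Finset.sum_add_distrib, Finset.mul_sum]

end Laplacian

section KellerOsserman

open InnerProductSpace Laplacian Module

variable {E : Type*} [NormedAddCommGroup E] {x₀ : E} {R : ℝ}

/-- The weight `ρ(x) = R² - |x - x₀|²` of the Keller–Osserman argument, which is positive inside the
ball of radius `R` around `x₀` and vanishes on its boundary. -/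
def ballWeight (x₀ : E) (R : ℝ) (x : E) : ℝ := R ^ 2 - ‖x - x₀‖ ^ 2

lemma ballWeight_nonneg {x : E} (hx : x ∈ closedBall x₀ R) : 0 ≤ ballWeight x₀ R x := by
  rw [mem_closedBall_iff_norm] at hx
  exact sub_nonneg.2 (by gcongr)

lemma mem_ball_of_ballWeight_pos {x : E} (hR : 0 ≤ R) (hx : 0 < ballWeight x₀ R x) :
    x ∈ ball x₀ R :=
  mem_ball_iff_norm.2 (lt_of_pow_lt_pow_left₀ 2 hR (sub_pos.1 hx))

variable [InnerProductSpace ℝ E]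

lemma contDiff_ballWeight {k : WithTop ℕ∞} : ContDiff ℝ k (ballWeight x₀ R) :=
  contDiff_const.sub ((contDiff_id.sub contDiff_const).norm_sq ℝ)

lemma fderiv_ballWeight (x : E) :
    fderiv ℝ (ballWeight x₀ R) x = -(2 • innerSL ℝ (x - x₀)) := by
  have h : HasFDerivAt (fun z => ‖z - x₀‖ ^ 2) (2 • innerSL ℝ (x - x₀)) x := by
    simpa using ((hasFDerivAt_id x).sub_const x₀).norm_sq
  exact (h.const_sub (R ^ 2)).fderiv

lemma fderiv_ballWeight_apply (x v : E) :
    fderiv ℝ (ballWeight x₀ R) x v = -2 * inner ℝ (x - x₀) v := by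
  rw [fderiv_ballWeight]
  simp [-map_sub, two_mul]

lemma ballWeight_mul_fderiv_eq_of_isLocalMax {u : E → ℝ} {y : E} (hu : DifferentiableAt ℝ u y)
    (hmax : IsLocalMax (fun x => ballWeight x₀ R x * u x) y) (v : E) :
    ballWeight x₀ R y * fderiv ℝ u y v = 2 * u y * inner ℝ (y - x₀) v := by
  have hzero := DFunLike.congr_fun hmax.fderiv_eq_zero v
  rw [fderiv_fun_mul (contDiff_ballWeight.differentiable one_ne_zero y) hu] at hzero
  simp only [add_apply, smul_apply, smul_eq_mul, fderiv_ballWeight_apply, zero_apply] at hzero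
  linarith

variable [FiniteDimensional ℝ E]

lemma laplacian_ballWeight (x : E) : Δ (ballWeight x₀ R) x = -2 * finrank ℝ E := by
  have hfderiv : fderiv ℝ (fderiv ℝ (ballWeight x₀ R)) x = -(2 • innerSL ℝ) := by
    rw [funext fderiv_ballWeight]
    exact ((((innerSL ℝ).hasFDerivAt.comp x ((hasFDerivAt_id x).sub_const x₀)).const_smul
      2).neg).fderiv
  simp [laplacian_eq_sum_fderiv_fderiv_apply (stdOrthonormalBasis ℝ E), hfderiv,
    innerSL_apply_apply ℝ, mul_comm]

lemma laplacian_ballWeight_mul {u : E → ℝ} {x : E} (hu : ContDiffAt ℝ 2 u x) :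
    Δ (fun z => ballWeight x₀ R z * u z) x =
      ballWeight x₀ R x * Δ u x - 4 * fderiv ℝ u x (x - x₀) - 2 * finrank ℝ E * u x := by
  let b := stdOrthonormalBasis ℝ E
  have hcross : ∑ i, inner ℝ (x - x₀) (b i) * fderiv ℝ u x (b i) = fderiv ℝ u x (x - x₀) := by
    conv_rhs => rw [← b.sum_repr' (x - x₀)]
    simp [real_inner_comm]
  rw [laplacian_mul b contDiff_ballWeight.contDiffAt hu, laplacian_ballWeight]
  simp only [fderiv_ballWeight_apply, mul_assoc, ← Finset.mul_sum, hcross]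
  ring

lemma ballWeight_sq_mul_laplacian_le_of_isLocalMax {u : E → ℝ} {y : E}
    (hu : ContDiffAt ℝ 2 u y) (hy : 0 ≤ ballWeight x₀ R y)
    (hmax : IsLocalMax (fun x => ballWeight x₀ R x * u x) y) :
    ballWeight x₀ R y ^ 2 * Δ u y ≤
      (2 * finrank ℝ E * ballWeight x₀ R y + 8 * ‖y - x₀‖ ^ 2) * u y := by
  have hfirst := ballWeight_mul_fderiv_eq_of_isLocalMax (hu.differentiableAt two_ne_zero) hmax
    (y - x₀)
  rw [real_inner_self_eq_norm_sq] at hfirst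
  have hsecond := laplacian_nonpos_of_isLocalMax (contDiff_ballWeight.contDiffAt.mul hu) hmax
  rw [laplacian_ballWeight_mul hu] at hsecond
  linarith [mul_nonpos_of_nonneg_of_nonpos hy hsecond]

theorem ballWeight_mul_le_of_cube_le_laplacian {u : E → ℝ}
    (hcont : ContinuousOn u (closedBall x₀ R)) (hdiff : ContDiffOn ℝ 2 u (ball x₀ R))
    (hsub : ∀ x ∈ ball x₀ R, 0 < u x → u x ^ 3 ≤ Δ u x) {x : E} (hx : x ∈ closedBall x₀ R) :
    ballWeight x₀ R x * u x ≤ √(2 * finrank ℝ E + 8) * R := by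
  have hR : 0 ≤ R := dist_nonneg.trans (mem_closedBall.1 hx)
  obtain ⟨y, hy, hymax⟩ := (isCompact_closedBall x₀ R).exists_isMaxOn
    ⟨x₀, mem_closedBall_self hR⟩
    ((contDiff_ballWeight (k := 0)).continuous.continuousOn.mul hcont)
  refine (hymax hx).trans ?_
  have hρ := ballWeight_nonneg hy
  rcases le_or_gt (ballWeight x₀ R y * u y) 0 with hnonpos | hpos
  · exact hnonpos.trans (by positivity)
  have huy : 0 < u y := pos_of_mul_pos_right hpos hρ
  have hyball : y ∈ ball x₀ R :=
    mem_ball_of_ballWeight_pos hR (pos_of_mul_pos_left hpos huy.le)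
  have hlocal : IsLocalMax (fun x => ballWeight x₀ R x * u x) y :=
    hymax.isLocalMax (closedBall_mem_nhds_of_mem hyball)
  have hcoeff : 2 * finrank ℝ E * ballWeight x₀ R y + 8 * ‖y - x₀‖ ^ 2 ≤
      (2 * finrank ℝ E + 8) * R ^ 2 := by
    have : 0 ≤ (finrank ℝ E : ℝ) * ‖y - x₀‖ ^ 2 := by positivity
    unfold ballWeight at hρ ⊢
    linarith
  have hsq : (ballWeight x₀ R y * u y) ^ 2 ≤ (2 * finrank ℝ E + 8) * R ^ 2 := by
    refine le_of_mul_le_mul_right ?_ huy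
    calc (ballWeight x₀ R y * u y) ^ 2 * u y
        = ballWeight x₀ R y ^ 2 * u y ^ 3 := by ring
      _ ≤ ballWeight x₀ R y ^ 2 * Δ u y := by gcongr; exact hsub y hyball huy
      _ ≤ (2 * finrank ℝ E * ballWeight x₀ R y + 8 * ‖y - x₀‖ ^ 2) * u y :=
        ballWeight_sq_mul_laplacian_le_of_isLocalMax
          (hdiff.contDiffAt (isOpen_ball.mem_nhds hyball)) hρ hlocal
      _ ≤ (2 * finrank ℝ E + 8) * R ^ 2 * u y := by gcongr
  calc ballWeight x₀ R y * u y ≤ √((2 * finrank ℝ E + 8) * R ^ 2) := Real.le_sqrt_of_sq_le hsq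
    _ = √(2 * finrank ℝ E + 8) * R := by rw [Real.sqrt_mul (by positivity), Real.sqrt_sq hR]

/-- The upper bound on a ball of radius `r`, in dimension `n`, for functions that satisfy `Δu ≥ u³`
on the concentric ball of radius `R > r`. -/
noncomputable def kellerOssermanBound (n : ℕ) (r R : ℝ) : ℝ := √(2 * n + 8) * R / (R ^ 2 - r ^ 2)

lemma kellerOssermanBound_nonneg {n : ℕ} {r : ℝ} (hr : 0 ≤ r) (hrR : r ≤ R) :
    0 ≤ kellerOssermanBound n r R :=
  div_nonneg (mul_nonneg (Real.sqrt_nonneg _) (hr.trans hrR)) (sub_nonneg.2 (by gcongr))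

theorem le_kellerOssermanBound_of_cube_le_laplacian {u : E → ℝ} {r : ℝ} (hrR : r < R)
    (hcont : ContinuousOn u (closedBall x₀ R)) (hdiff : ContDiffOn ℝ 2 u (ball x₀ R))
    (hsub : ∀ x ∈ ball x₀ R, 0 < u x → u x ^ 3 ≤ Δ u x) {x : E} (hx : x ∈ closedBall x₀ r) :
    u x ≤ kellerOssermanBound (finrank ℝ E) r R := by
  have hr : 0 ≤ r := dist_nonneg.trans (mem_closedBall.1 hx)
  have hgap : 0 < R ^ 2 - r ^ 2 := sub_pos.2 (by gcongr)
  rcases le_or_gt (u x) 0 with hnonpos | hpos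
  · exact hnonpos.trans (kellerOssermanBound_nonneg hr hrR.le)
  have hweight : R ^ 2 - r ^ 2 ≤ ballWeight x₀ R x :=
    sub_le_sub_left (pow_le_pow_left₀ (norm_nonneg _) (mem_closedBall_iff_norm.1 hx) 2) _
  rw [kellerOssermanBound, le_div_iff₀' hgap]
  calc (R ^ 2 - r ^ 2) * u x ≤ ballWeight x₀ R x * u x := by gcongr
    _ ≤ √(2 * finrank ℝ E + 8) * R :=
      ballWeight_mul_le_of_cube_le_laplacian hcont hdiff hsub
        (closedBall_subset_closedBall hrR.le hx)

end KellerOsserman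

section Nonuniqueness

open InnerProductSpace Laplacian Module
open scoped ContDiff

section PerturbedCube

variable {E : Type*} {φ : E → ℝ} {K : ℝ}

/-- The nonlinearity `(x, μ) ↦ μ³ + φ(x) g(μ)`, where `g` is a smooth monotone function vanishing
exactly for `μ ≤ K`. -/
noncomputable def perturbedCube (φ : E → ℝ) (K : ℝ) (p : E × ℝ) : ℝ :=
  p.2 ^ 3 + φ p.1 * Real.smoothTransition (p.2 - K)

lemma perturbedCube_of_le {x : E} {μ : ℝ} (hμ : μ ≤ K) : perturbedCube φ K (x, μ) = μ ^ 3 := by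
  simp [perturbedCube, Real.smoothTransition.zero_of_nonpos (sub_nonpos.2 hμ)]

lemma perturbedCube_of_eq_zero {x : E} {μ : ℝ} (hx : φ x = 0) :
    perturbedCube φ K (x, μ) = μ ^ 3 := by
  simp [perturbedCube, hx]

lemma cube_le_perturbedCube {x : E} (hx : 0 ≤ φ x) (μ : ℝ) : μ ^ 3 ≤ perturbedCube φ K (x, μ) :=
  le_add_of_nonneg_right (mul_nonneg hx (Real.smoothTransition.nonneg _))

lemma cube_lt_perturbedCube {x : E} {μ : ℝ} (hx : 0 < φ x) (hμ : K < μ) :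
    μ ^ 3 < perturbedCube φ K (x, μ) :=
  lt_add_of_pos_right _ (mul_pos hx (Real.smoothTransition.pos_of_pos (sub_pos.2 hμ)))

lemma monotone_perturbedCube {x : E} (hx : 0 ≤ φ x) :
    Monotone fun μ => perturbedCube φ K (x, μ) :=
  (Odd.strictMono_pow (by decide)).monotone.add <| Monotone.const_mul
    (fun _ _ h => Real.smoothTransition.monotone (sub_le_sub_right h K)) hx

lemma contDiff_perturbedCube [NormedAddCommGroup E] [NormedSpace ℝ E] {k : ℕ∞}
    (hφ : ContDiff ℝ k φ) : ContDiff ℝ k (perturbedCube φ K) :=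
  (contDiff_snd.pow 3).add <| (hφ.comp contDiff_fst).mul <|
    Real.smoothTransition.contDiff.comp (contDiff_snd.sub contDiff_const)

end PerturbedCube

variable {E : Type*} [NormedAddCommGroup E] [InnerProductSpace ℝ E] [FiniteDimensional ℝ E]
  {M : Set E}

lemma perturbedCube_eq_cube_of_cube_le_laplacian {φ u : E → ℝ} {x₀ : E} {r R : ℝ}
    (hrR : r < R) (hball : closedBall x₀ R ⊆ M) (hφ : ∀ x ∉ closedBall x₀ r, φ x = 0)
    (hu : ContDiffOn ℝ 2 u M) (hsub : ∀ x ∈ M, u x ^ 3 ≤ Δ u x) (x : E) :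
    perturbedCube φ (kellerOssermanBound (finrank ℝ E) r R) (x, u x) = u x ^ 3 := by
  by_cases hx : x ∈ closedBall x₀ r
  · have hball' : ball x₀ R ⊆ M := ball_subset_closedBall.trans hball
    exact perturbedCube_of_le <| le_kellerOssermanBound_of_cube_le_laplacian hrR
      (hu.continuousOn.mono hball) (hu.mono hball') (fun z hz _ => hsub z (hball' hz)) hx
  · exact perturbedCube_of_eq_zero (hφ x hx)

lemma neg_laplacian_add_cube_eq_zero_iff_perturbedCube {φ u : E → ℝ} {x₀ : E} {r R : ℝ}
    (hrR : r < R) (hball : closedBall x₀ R ⊆ M) (hφ_nonneg : ∀ x, 0 ≤ φ x)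
    (hφ : ∀ x ∉ closedBall x₀ r, φ x = 0) (hu : ContDiffOn ℝ 2 u M) :
    (∀ x ∈ M, -Δ u x + u x ^ 3 = 0) ↔ ∀ x ∈ M, -Δ u x +
      perturbedCube φ (kellerOssermanBound (finrank ℝ E) r R) (x, u x) = 0 := by
  constructor <;> intro hsol x hx
  · rw [perturbedCube_eq_cube_of_cube_le_laplacian hrR hball hφ hu
      (fun z hz => by linarith [hsol z hz]), hsol x hx]
  · rw [← perturbedCube_eq_cube_of_cube_le_laplacian hrR hball hφ hu
      (fun z hz => (cube_le_perturbedCube (hφ_nonneg z) (u z)).trans (by linarith [hsol z hz])),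
      hsol x hx]

theorem stmt_14_general (hMne : M.Nonempty) (hMopen : IsOpen M) :
    ∃ a₁ a₂ : E × ℝ → ℝ,
      ContDiff ℝ ∞ a₁ ∧ ContDiff ℝ ∞ a₂ ∧
      (∃ p ∈ M ×ˢ (univ : Set ℝ), a₁ p ≠ a₂ p) ∧
      (∀ x, a₁ (x, 0) = 0) ∧ (∀ x, a₂ (x, 0) = 0) ∧
      (∀ x μ, 0 ≤ deriv (fun t => a₁ (x, t)) μ) ∧
      (∀ x μ, 0 ≤ deriv (fun t => a₂ (x, t)) μ) ∧
      ∀ u : E → ℝ, ContDiffOn ℝ 2 u M →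
        ((∀ x ∈ M, -Δ u x + a₁ (x, u x) = 0) ↔ ∀ x ∈ M, -Δ u x + a₂ (x, u x) = 0) := by
  obtain ⟨x₀, hx₀⟩ := hMne
  obtain ⟨R, hR, hball⟩ := nhds_basis_closedBall.mem_iff.1 (hMopen.mem_nhds hx₀)
  let φ : ContDiffBump x₀ := ⟨R / 4, R / 2, by positivity, by linarith⟩
  have hφ_zero (x : E) (hx : x ∉ closedBall x₀ (R / 2)) : φ x = 0 :=
    φ.zero_of_le_dist (not_le.1 hx).le
  let K := kellerOssermanBound (finrank ℝ E) (R / 2) R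
  have hK : 0 ≤ K := kellerOssermanBound_nonneg (by positivity) (half_le_self hR.le)
  refine ⟨fun p => p.2 ^ 3, perturbedCube φ K, contDiff_snd.pow 3,
    contDiff_perturbedCube φ.contDiff, ⟨(x₀, K + 1), ⟨hx₀, mem_univ _⟩, ?_⟩, by simp,
    fun _ => ?_, fun _ _ => ?_, fun _ _ => ?_, fun u hu => ?_⟩
  · exact (cube_lt_perturbedCube (φ.pos_of_mem_ball (mem_ball_self φ.rOut_pos))
      (lt_add_one K)).ne
  · simp [perturbedCube_of_le hK]
  · exact (Odd.strictMono_pow (by decide)).monotone.deriv_nonneg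
  · exact (monotone_perturbedCube φ.nonneg).deriv_nonneg
  · exact neg_laplacian_add_cube_eq_zero_iff_perturbedCube (half_lt_self hR) hball
      (fun _ => φ.nonneg) hφ_zero hu

lemma neg_lap_add_eq_zero_iff_laplacian {n : ℕ} {M : Set (EuclideanSpace ℝ (Fin n))}
    {u : EuclideanSpace ℝ (Fin n) → ℝ} (hM : IsOpen M) (hu : ContDiffOn ℝ 2 u M)
    (a : EuclideanSpace ℝ (Fin n) × ℝ → ℝ) :
    (∀ x ∈ M, -lap u x + a (x, u x) = 0) ↔ ∀ x ∈ M, -Δ u x + a (x, u x) = 0 :=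
  forall₂_congr fun _ hx => by rw [lap_eq_laplacian (hu.contDiffAt (hM.mem_nhds hx))]

end Nonuniqueness

theorem stmt_14 (n : ℕ) (hn : 2 ≤ n) (M : Set (EuclideanSpace ℝ (Fin n)))
    (hMne : M.Nonempty) (hMopen : IsOpen M) (hMbdd : Bornology.IsBounded M)
    (hMconn : IsConnected M) :
    ∃ a₁ a₂ : EuclideanSpace ℝ (Fin n) × ℝ → ℝ,
      ContDiffOn ℝ 2 a₁ (closure M ×ˢ (univ : Set ℝ)) ∧
      ContDiffOn ℝ 2 a₂ (closure M ×ˢ (univ : Set ℝ)) ∧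
      (∃ p ∈ closure M ×ˢ (univ : Set ℝ), a₁ p ≠ a₂ p) ∧
      (∀ x ∈ closure M, a₁ (x, 0) = 0) ∧
      (∀ x ∈ closure M, a₂ (x, 0) = 0) ∧
      (∀ x ∈ closure M, ∀ μ : ℝ, 0 ≤ deriv (fun t => a₁ (x, t)) μ) ∧
      (∀ x ∈ closure M, ∀ μ : ℝ, 0 ≤ deriv (fun t => a₂ (x, t)) μ) ∧
      (∀ u : EuclideanSpace ℝ (Fin n) → ℝ,
        ContinuousOn u (closure M) → ContDiffOn ℝ 2 u M →
        ((∀ x ∈ M, -lap u x + a₁ (x, u x) = 0) ↔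
         (∀ x ∈ M, -lap u x + a₂ (x, u x) = 0))) := by
  obtain ⟨a₁, a₂, h₁, h₂, ⟨p, hp, hne⟩, hzero₁, hzero₂, hmono₁, hmono₂, hsol⟩ :=
    stmt_14_general hMne hMopen
  exact ⟨a₁, a₂, (contDiff_infty.1 h₁ 2).contDiffOn, (contDiff_infty.1 h₂ 2).contDiffOn,
    ⟨p, prod_mono_left subset_closure hp, hne⟩, fun x _ => hzero₁ x, fun x _ => hzero₂ x,
    fun x _ => hmono₁ x, fun x _ => hmono₂ x,
    fun u _ hu => by simpa only [neg_lap_add_eq_zero_iff_laplacian hMopen hu] using hsol u hu⟩
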